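/- (Overshoot control, frequentist version of Theorem 1.) Let τ > 0 and A > 1 + τ, and set α = f_o(A,τ). Then α > 0 and for every square-summable θ : ℕ → ℝ and every integer n ≥ 1: P_θ({x ∈ ℝ^ℕ : there exists d ≥ d_τ(θ) + n with crit_A(x,d) ≤ crit_A(x,d_τ(θ))}) ≤ e^{−αn} / (1 − e^{−α}). -/

import Mathlib

open MeasureTheory ProbabilityTheory

noncomputable section

/-- Tail sum `∑_{i>d} θ_i²` (indices `i = 1,2,…`). -/
def tailSum (θ : ℕ → ℝ) (d : ℕ) : ℝ := ∑' i : ℕ, if d < i then θ i ^ 2 else 0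

/-- The τ-quantization error `r_τ(d,θ) = ∑_{i>d} θ_i² + τ d ε²`. -/
def rErr (ε τ : ℝ) (θ : ℕ → ℝ) (d : ℕ) : ℝ := tailSum θ d + τ * d * ε ^ 2

/-- The local effective τ-dimension: the smallest `d ≥ 1` minimizing `r_τ(·,θ)` over `d ≥ 1`. -/
def effDim (ε τ : ℝ) (θ : ℕ → ℝ) : ℕ :=
  sInf {d : ℕ | 1 ≤ d ∧ ∀ d' : ℕ, 1 ≤ d' → rErr ε τ θ d ≤ rErr ε τ θ d'}

/-- The penalized criterion `crit_A(x,d) = -∑_{i=1}^d x_i² + A ε² d`. -/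
def critF (ε A : ℝ) (x : ℕ → ℝ) (d : ℕ) : ℝ :=
  -(∑ i ∈ Finset.Icc 1 d, x i ^ 2) + A * ε ^ 2 * d

/-- `f(h,a,t) = (1/2)(a h + log(1-h) - t h/(1-h))`. -/
def fFun (h a t : ℝ) : ℝ := (a * h + Real.log (1 - h) - t * h / (1 - h)) / 2

/-- `g(h,a,t) = f(-h,a,t)`. -/
def gFun (h a t : ℝ) : ℝ := fFun (-h) a t

/-- `f_o(a,t) = sup_{h ∈ [0,1)} f(h,a,t)`. -/
def fSup (a t : ℝ) : ℝ := sSup ((fun h => fFun h a t) '' Set.Ico 0 1)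

/-- `g_o(a,t) = sup_{h ∈ [0,1]} g(h,a,t)`. -/
def gSup (a t : ℝ) : ℝ := sSup ((fun h => gFun h a t) '' Set.Icc 0 1)

/-- `P` is the infinite product measure `⨂_{i≥1} N(θ_i, ε²)` on the sequence space `ℝ^ℕ`,
characterized by being a probability measure whose finite-dimensional projections onto
the coordinates `1,…,n` are the corresponding finite products of Gaussians. -/
def IsGaussianProduct (ε : ℝ) (θ : ℕ → ℝ) (P : Measure (ℕ → ℝ)) : Prop :=
  IsProbabilityMeasure P ∧
  ∀ n : ℕ, P.map (fun x (i : Fin n) => x ((i : ℕ) + 1)) =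
    Measure.pi fun i : Fin n => gaussianReal (θ ((i : ℕ) + 1)) ((ε ^ 2).toNNReal)

lemma gauss_sq (μ h a v : ℝ) (hv : 0 < v) (h1 : h < 1) :
    ∫⁻ y, ENNReal.ofReal (Real.exp (h * (y ^ 2 / v - a) / 2)) ∂(gaussianReal μ v.toNNReal)
      = ENNReal.ofReal (Real.exp (-fFun h a (μ ^ 2 / v))) := by
  have hh : 0 < 1 - h := by linarith
  have hv0 : v.toNNReal ≠ 0 := by simpa using hv
  have hw : 0 < v / (1 - h) := by positivity
  have hw0 : (v / (1 - h)).toNNReal ≠ 0 := by simpa using hw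
  rw [gaussianReal_of_var_ne_zero _ hv0,
    lintegral_withDensity_eq_lintegral_mul _ (measurable_gaussianPDF _ _) (by fun_prop)]
  have key : ∀ y, (gaussianPDF μ v.toNNReal *
      fun y => ENNReal.ofReal (Real.exp (h * (y ^ 2 / v - a) / 2))) y =
      ENNReal.ofReal (Real.exp (-fFun h a (μ ^ 2 / v))) *
        gaussianPDF (μ / (1 - h)) (v / (1 - h)).toNNReal y := by
    intro y
    simp only [Pi.mul_apply, gaussianPDF]
    rw [← ENNReal.ofReal_mul (gaussianPDFReal_nonneg _ _ _),
      ← ENNReal.ofReal_mul (Real.exp_pos _).le]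
    congr 1
    simp only [gaussianPDFReal, Real.coe_toNNReal _ hv.le, Real.coe_toNNReal _ hw.le]
    have e1 : √(2 * Real.pi * (v / (1 - h))) =
        √(2 * Real.pi * v) * Real.exp (-(Real.log (1 - h) / 2)) := by
      rw [← mul_div_assoc, Real.sqrt_div (by positivity), div_eq_mul_inv]
      congr 1
      rw [Real.exp_neg, ← Real.log_sqrt hh.le, Real.exp_log (Real.sqrt_pos.2 hh)]
    rw [e1, mul_inv, ← Real.exp_neg, neg_neg]
    generalize √(2 * Real.pi * v) = q
    rw [mul_assoc, ← Real.exp_add, mul_left_comm,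
      mul_assoc, mul_left_comm, ← Real.exp_add, mul_left_comm, ← Real.exp_add]
    congr 2
    unfold fFun
    field_simp
    ring
  simp_rw [key]
  rw [lintegral_const_mul _ (measurable_gaussianPDF _ _), lintegral_gaussianPDF_eq_one _ hw0,
    mul_one]

lemma lint_prod (ε : ℝ) (θ : ℕ → ℝ) (P : Measure (ℕ → ℝ)) (hP : IsGaussianProduct ε θ P)
    (φ : ℕ → ℝ → ENNReal) (hφ : ∀ i, Measurable (φ i)) (d : ℕ) :
    ∫⁻ x, ∏ i ∈ Finset.range d, φ i (x (i + 1)) ∂P =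
      ∏ i ∈ Finset.range d, ∫⁻ y, φ i y ∂(gaussianReal (θ (i + 1)) (ε ^ 2).toNNReal) := by
  have h := hP.2 d
  have e : ∫⁻ x, ∏ i ∈ Finset.range d, φ i (x (i + 1)) ∂P =
      ∫⁻ z, ∏ i : Fin d, φ i (z i) ∂(P.map (fun x (i : Fin d) => x ((i : ℕ) + 1))) := by
    rw [lintegral_map (by fun_prop) (by fun_prop)]
    simp_rw [Finset.prod_range]
  rw [e, h, Finset.prod_range]
  rw [lintegral_prod_eq_prod_lintegral_of_indepFun Finset.univ
    (fun (i : Fin d) (z : Fin d → ℝ) => φ i (z i))]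
  · refine Finset.prod_congr rfl fun i _ => ?_
    have := measurePreserving_eval
      (fun i : Fin d => gaussianReal (θ ((i : ℕ) + 1)) ((ε ^ 2).toNNReal)) i
    exact this.lintegral_comp (hφ i)
  · exact iIndepFun_pi (X := fun (i : Fin d) => φ i) (fun i => (hφ i).aemeasurable)
  · intro i; exact (hφ i).comp (measurable_pi_apply i)

lemma sum_Icc_shift (g : ℕ → ℝ) (d : ℕ) :
    ∑ i ∈ Finset.Icc 1 d, g i = ∑ i ∈ Finset.range d, g (i + 1) := by
  induction d with
  | zero => simp
  | succ k ih => rw [Finset.sum_Icc_succ_top (by omega), ih, Finset.sum_range_succ]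

lemma tail_summable (θ : ℕ → ℝ) (hθ : Summable (fun i => θ i ^ 2)) (d : ℕ) :
    Summable (fun i : ℕ => if d < i then θ i ^ 2 else 0) := by
  refine Summable.of_nonneg_of_le (fun i => ?_) (fun i => ?_) hθ
  · split_ifs <;> positivity
  · split_ifs <;> first | exact le_rfl | positivity

lemma tail_step (θ : ℕ → ℝ) (hθ : Summable (fun i => θ i ^ 2)) (d : ℕ) :
    tailSum θ d = θ (d + 1) ^ 2 + tailSum θ (d + 1) := by
  unfold tailSum
  have e : (fun i : ℕ => if d < i then θ i ^ 2 else 0) =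
      fun i => (if i = d + 1 then θ (d + 1) ^ 2 else 0) +
        (if d + 1 < i then θ i ^ 2 else 0) := by
    funext i
    rcases lt_trichotomy i (d + 1) with h | h | h
    · rw [if_neg (by omega), if_neg (by omega), if_neg (by omega), add_zero]
    · subst h; simp
    · rw [if_pos (by omega), if_neg (by omega), if_pos (by omega), zero_add]
  rw [e, Summable.tsum_add (hasSum_ite_eq (d + 1) _).summable (tail_summable θ hθ (d + 1)),
    tsum_ite_eq]

lemma tail_add (θ : ℕ → ℝ) (hθ : Summable (fun i => θ i ^ 2)) (d m : ℕ) :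
    tailSum θ d = ∑ j ∈ Finset.range m, θ (d + j + 1) ^ 2 + tailSum θ (d + m) := by
  induction m with
  | zero => simp
  | succ k ih => rw [ih, Finset.sum_range_succ, tail_step θ hθ (d + k)]; ring_nf

lemma tail_nonneg (θ : ℕ → ℝ) (d : ℕ) : 0 ≤ tailSum θ d :=
  tsum_nonneg fun i => by split_ifs <;> positivity

lemma effDim_spec (ε τ : ℝ) (hε : 0 < ε) (hτ : 0 < τ) (θ : ℕ → ℝ) :
    1 ≤ effDim ε τ θ ∧ ∀ d', 1 ≤ d' → rErr ε τ θ (effDim ε τ θ) ≤ rErr ε τ θ d' := by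
  apply Nat.sInf_mem (s := {d : ℕ | 1 ≤ d ∧ ∀ d' : ℕ, 1 ≤ d' → rErr ε τ θ d ≤ rErr ε τ θ d'})
  have hc : 0 < τ * ε ^ 2 := by positivity
  obtain ⟨N, hN⟩ := exists_nat_ge (rErr ε τ θ 1 / (τ * ε ^ 2))
  rw [div_le_iff₀ hc] at hN
  obtain ⟨d, hd, hmin⟩ := Finset.exists_min_image (Finset.Icc 1 (N + 1)) (rErr ε τ θ)
    ⟨1, by simp⟩
  rw [Finset.mem_Icc] at hd
  refine ⟨d, hd.1, fun d' hd' => ?_⟩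
  by_cases h : d' ≤ N + 1
  · exact hmin d' (Finset.mem_Icc.2 ⟨hd', h⟩)
  · refine (hmin 1 (by simp)).trans (hN.trans ?_)
    have h2 : (N : ℝ) ≤ d' := by exact_mod_cast (by omega : N ≤ d')
    have := tail_nonneg θ d'
    have h3 := mul_le_mul_of_nonneg_right h2 hc.le
    unfold rErr
    nlinarith

lemma fSup_bdd (A τ : ℝ) (hA : 0 < A) (hτ : 0 < τ) :
    BddAbove ((fun h => fFun h A τ) '' Set.Ico 0 1) := by
  refine ⟨A, ?_⟩
  rintro _ ⟨h, ⟨h0, h1⟩, rfl⟩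
  have hh : 0 < 1 - h := by linarith
  have l := Real.log_nonpos hh.le (by linarith)
  have q : 0 ≤ τ * h / (1 - h) := by positivity
  simp only [fFun]
  nlinarith

lemma fSup_pos (A τ : ℝ) (hτ : 0 < τ) (hA : 1 + τ < A) : 0 < fSup A τ := by
  have hA0 : 0 < A := by linarith
  set h : ℝ := (A - (1 + τ)) / (2 * A) with hdef
  have h0 : 0 < h := div_pos (by linarith) (by linarith)
  have h1 : h < 1 := by rw [hdef, div_lt_one (by linarith)]; linarith
  have hh : 0 < 1 - h := by linarith
  refine lt_of_lt_of_le ?_ (le_csSup (fSup_bdd A τ hA0 hτ) ⟨h, ⟨h0.le, h1⟩, rfl⟩)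
  have l := Real.one_sub_inv_le_log_of_pos hh
  have e : 1 - (1 - h)⁻¹ = -(h / (1 - h)) := by field_simp; ring
  have e2 : A * (1 - h) = (A + (1 + τ)) / 2 := by rw [hdef]; field_simp; ring
  have e3 : 0 < h / (1 - h) := by positivity
  have e4 : A * h = (A * (1 - h)) * (h / (1 - h)) := by field_simp
  have e5 : τ * h / (1 - h) = τ * (h / (1 - h)) := by ring
  simp only [fFun]
  rw [e4, e2, e5]
  nlinarith [mul_pos e3 (sub_pos.2 hA)]

lemma one_bound (ε τ A : ℝ) (hε : 0 < ε) (hτ : 0 < τ) (θ : ℕ → ℝ)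
    (hθ : Summable (fun i => θ i ^ 2)) (P : Measure (ℕ → ℝ)) (hP : IsGaussianProduct ε θ P)
    (m : ℕ) (h : ℝ) (h0 : 0 ≤ h) (h1 : h < 1) :
    P {x | critF ε A x (effDim ε τ θ + m) ≤ critF ε A x (effDim ε τ θ)} ≤
      ENNReal.ofReal (Real.exp (-(m * fFun h A τ))) := by
  obtain ⟨hd1, hmin⟩ := effDim_spec ε τ hε hτ θ
  set D := effDim ε τ θ with hD
  have hε2 : 0 < ε ^ 2 := by positivity
  have hh : 0 < 1 - h := by linarith
  let c : ℕ → ℝ := fun i => if D ≤ i then h else 0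
  have hc1 : ∀ i, c i < 1 := fun i => by
    simp only [c]; split_ifs <;> linarith
  let φ : ℕ → ℝ → ENNReal := fun i y =>
    ENNReal.ofReal (Real.exp (c i * (y ^ 2 / ε ^ 2 - A) / 2))
  have hφ : ∀ i, Measurable (φ i) := fun i => by simp only [φ]; fun_prop
  have hprod : ∀ x : ℕ → ℝ, ∏ i ∈ Finset.range (D + m), φ i (x (i + 1)) =
      ENNReal.ofReal (Real.exp (∑ j ∈ Finset.range m,
        (h * (x (D + j + 1) ^ 2 / ε ^ 2 - A) / 2))) := by
    intro x
    simp only [φ]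
    rw [← ENNReal.ofReal_prod_of_nonneg (fun i _ => (Real.exp_pos _).le), ← Real.exp_sum,
      Finset.sum_range_add, Finset.sum_eq_zero, zero_add]
    · simp [c]
    · intro i hi
      have : ¬ D ≤ i := by simpa using hi
      simp [c, this]
  have hmark : P {x | critF ε A x (D + m) ≤ critF ε A x D} ≤
      ∫⁻ x, ∏ i ∈ Finset.range (D + m), φ i (x (i + 1)) ∂P := by
    refine meas_le_lintegral₀ ?_ ?_
    · exact (Finset.measurable_prod _ fun i _ =>
        (hφ i).comp (measurable_pi_apply (i + 1))).aemeasurable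
    · intro x hx
      rw [hprod, ENNReal.one_le_ofReal]
      apply Real.one_le_exp
      simp only [Set.mem_ofPred_eq, critF, sum_Icc_shift, Finset.sum_range_add] at hx
      rw [← Finset.sum_div, ← Finset.mul_sum, Finset.sum_sub_distrib, ← Finset.sum_div]
      simp only [Finset.sum_const, Finset.card_range, nsmul_eq_mul]
      push_cast at hx
      have : (m : ℝ) * A ≤ (∑ i ∈ Finset.range m, x (D + i + 1) ^ 2) / ε ^ 2 := by
        rw [le_div_iff₀ hε2]; nlinarith
      have h5 := mul_nonneg h0 (sub_nonneg.2 this)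
      linarith
  refine hmark.trans ?_
  rw [lint_prod ε θ P hP φ hφ]
  simp only [φ]
  simp_rw [fun i => gauss_sq (θ (i + 1)) (c i) A (ε ^ 2) hε2 (hc1 i)]
  rw [← ENNReal.ofReal_prod_of_nonneg (fun i _ => (Real.exp_pos _).le), ← Real.exp_sum,
      Finset.sum_range_add, Finset.sum_eq_zero, zero_add]
  · apply ENNReal.ofReal_le_ofReal
    apply Real.exp_le_exp.2
    have hs : ∑ j ∈ Finset.range m, θ (D + j + 1) ^ 2 ≤ m * τ * ε ^ 2 := by
      have := hmin (D + m) (by omega)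
      unfold rErr at this
      rw [tail_add θ hθ D m] at this
      push_cast at this
      nlinarith
    have hs2 : (∑ j ∈ Finset.range m, θ (D + j + 1) ^ 2) / ε ^ 2 ≤ m * τ := by
      rw [div_le_iff₀ hε2]; exact hs
    have e : ∑ x ∈ Finset.range m, -fFun (c (D + x)) A (θ (D + x + 1) ^ 2 / ε ^ 2) =
        -(m * (A * h + Real.log (1 - h)) / 2) +
        (∑ j ∈ Finset.range m, θ (D + j + 1) ^ 2) / ε ^ 2 * (h / (1 - h) / 2) := by
      rw [Finset.sum_div, Finset.sum_mul]
      have : -(m * (A * h + Real.log (1 - h)) / 2) =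
        ∑ j ∈ Finset.range m, -((A * h + Real.log (1 - h)) / 2) := by simp; ring
      rw [this, ← Finset.sum_add_distrib]
      refine Finset.sum_congr rfl fun j _ => ?_
      simp only [c, fFun, Nat.le_add_right, if_true]
      ring
    rw [e]
    have h6 := mul_le_mul_of_nonneg_right hs2 (by positivity : 0 ≤ h / (1 - h) / 2)
    have e7 : -(m * fFun h A τ) = -(m * (A * h + Real.log (1 - h)) / 2) +
        m * τ * (h / (1 - h) / 2) := by unfold fFun; ring
    rw [e7]
    linarith
  · intro i hi
    have : ¬ D ≤ i := by simpa using hi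
    simp [c, this, fFun]

lemma sup_bound (p : ENNReal) (m : ℕ) (hm : 1 ≤ m) (A τ : ℝ)
    (H : ∀ h, 0 ≤ h → h < 1 → p ≤ ENNReal.ofReal (Real.exp (-(m * fFun h A τ)))) :
    p ≤ ENNReal.ofReal (Real.exp (-(m * fSup A τ))) := by
  have hpt : p ≠ ⊤ := ne_top_of_le_ne_top ENNReal.ofReal_ne_top (H 0 le_rfl one_pos)
  rw [ENNReal.le_ofReal_iff_toReal_le hpt (Real.exp_pos _).le]
  rcases (ENNReal.toReal_nonneg (a := p)).eq_or_lt with h0 | h0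
  · rw [← h0]; exact (Real.exp_pos _).le
  have hm' : (0 : ℝ) < m := by exact_mod_cast hm
  rw [← Real.log_le_iff_le_exp h0]
  have : fSup A τ ≤ -Real.log p.toReal / m := by
    refine csSup_le ⟨_, 0, by simp, rfl⟩ ?_
    rintro _ ⟨h, ⟨ha, hb⟩, rfl⟩
    have := H h ha hb
    rw [ENNReal.le_ofReal_iff_toReal_le hpt (Real.exp_pos _).le,
      ← Real.log_le_iff_le_exp h0] at this
    rw [le_div_iff₀ hm']
    simp only
    linarith
  rw [le_div_iff₀ hm'] at this
  linarith

theorem stmt10 (ε τ A : ℝ) (hε : 0 < ε) (hτ : 0 < τ) (hA : 1 + τ < A) :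
    0 < fSup A τ ∧
    ∀ θ : ℕ → ℝ, Summable (fun i => θ i ^ 2) →
    ∀ n : ℕ, 1 ≤ n →
    ∀ P : Measure (ℕ → ℝ), IsGaussianProduct ε θ P →
    P {x | ∃ d : ℕ, effDim ε τ θ + n ≤ d ∧
        critF ε A x d ≤ critF ε A x (effDim ε τ θ)} ≤
      ENNReal.ofReal (Real.exp (-(fSup A τ) * n) / (1 - Real.exp (-(fSup A τ)))) := by
  refine ⟨fSup_pos A τ hτ hA, ?_⟩
  intro θ hθ n hn P hP
  have hα := fSup_pos A τ hτ hA
  set α := fSup A τ with hαd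
  have hr0 : 0 ≤ Real.exp (-α) := (Real.exp_pos _).le
  have hr1 : Real.exp (-α) < 1 := by rw [Real.exp_lt_one_iff]; linarith
  have hsub : {x | ∃ d : ℕ, effDim ε τ θ + n ≤ d ∧
        critF ε A x d ≤ critF ε A x (effDim ε τ θ)} ⊆
      ⋃ k : ℕ, {x | critF ε A x (effDim ε τ θ + (n + k)) ≤ critF ε A x (effDim ε τ θ)} := by
    rintro x ⟨d, hd, hx⟩
    obtain ⟨k, rfl⟩ := Nat.exists_eq_add_of_le hd
    refine Set.mem_iUnion.2 ⟨k, ?_⟩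
    simpa [add_assoc] using hx
  refine (measure_mono hsub).trans ((measure_iUnion_le _).trans ?_)
  have hk : ∀ k : ℕ, P {x | critF ε A x (effDim ε τ θ + (n + k)) ≤
      critF ε A x (effDim ε τ θ)} ≤
      ENNReal.ofReal (Real.exp (-α * n) * Real.exp (-α) ^ k) := by
    intro k
    refine (sup_bound _ (n + k) (by omega) A τ
      (fun h h0 h1 => one_bound ε τ A hε hτ θ hθ P hP (n + k) h h0 h1)).trans (le_of_eq ?_)
    rw [← Real.exp_nat_mul, ← Real.exp_add]
    congr 2
    push_cast
    ring
  refine (ENNReal.tsum_le_tsum hk).trans (le_of_eq ?_)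
  rw [← ENNReal.ofReal_tsum_of_nonneg (fun k => by positivity)
    ((summable_geometric_of_lt_one hr0 hr1).mul_left _), tsum_mul_left,
    tsum_geometric_of_lt_one hr0 hr1, div_eq_mul_inv]
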